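/- The infinite series ∑_{n=1}^{∞} 1/(n²(2n−1)(4n−3)) converges to (π² + 8π − 24·ln 2)/18. -/

import Mathlib

/-!
With `k = n + 1`, partial fractions give
`1 / (k² (2k - 1) (4k - 3)) = 1/(3k²) + 10/(9k) - 4/(2k - 1) + 32/(9(4k - 3))`.
The sums of the last three terms over `k ≤ N` are combinations of the harmonic numbers
`H_N`, `H_{2N}`, `H_{4N}` and of the partial sum `L_{2N}` of the Leibniz series, which yields
`∑_{k ≤ N} = (1/3) ∑_{k ≤ N} 1/k² + (28/9) H_N - (44/9) H_{2N} + (16/9) H_{4N} + (16/9) L_{2N}`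
(`partial_sum_eq`). The harmonic coefficients add up to zero, so by `H_m - log m → γ` the harmonic
part tends to `(-44/9 + 2 · 16/9) log 2 = -(4/3) log 2`; the remaining limits are `ζ(2) = π²/6` and
Leibniz's `π/4`. The terms are nonnegative, so convergence of partial sums is summability.
-/

open Real

open Filter Topology

lemma partial_sum_eq (N : ℕ) :
    ∑ n ∈ Finset.range N, 1 / (((n:ℝ)+1)^2 * (2*((n:ℝ)+1)-1) * (4*((n:ℝ)+1)-3)) =
      1/3 * ∑ n ∈ Finset.range N, 1 / ((n:ℝ)+1)^2
      + 28/9 * (harmonic N : ℝ) - 44/9 * (harmonic (2*N) : ℝ) + 16/9 * (harmonic (4*N) : ℝ)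
      + 16/9 * ∑ i ∈ Finset.range (2*N), (-1:ℝ)^i / (2*i+1) := by
  induction N with
  | zero => simp
  | succ N ih =>
    rw [Finset.sum_range_succ, Finset.sum_range_succ, ih,
      show 2*(N+1) = 2*N+1+1 by ring, show 4*(N+1) = 4*N+1+1+1+1 by ring,
      Finset.sum_range_succ _ (2*N+1), Finset.sum_range_succ _ (2*N)]
    simp only [harmonic_succ, pow_succ (-1:ℝ), pow_mul]
    push_cast
    have h0 : (0:ℝ) ≤ N := N.cast_nonneg
    have h1 : 2*((N:ℝ)+1)-1 ≠ 0 := by linarith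
    have h2 : 4*((N:ℝ)+1)-3 ≠ 0 := by linarith
    have key : 1 / (((N:ℝ)+1)^2 * (2*((N:ℝ)+1)-1) * (4*((N:ℝ)+1)-3)) =
        1/3 * (1/((N:ℝ)+1)^2) + 28/9 * ((N:ℝ)+1)⁻¹
        - 44/9 * ((2*(N:ℝ)+1)⁻¹ + (2*(N:ℝ)+1+1)⁻¹)
        + 16/9 * ((4*(N:ℝ)+1)⁻¹ + (4*(N:ℝ)+1+1)⁻¹ + (4*(N:ℝ)+1+1+1)⁻¹ + (4*(N:ℝ)+1+1+1+1)⁻¹)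
        + 16/9 * (1/(2*(2*(N:ℝ))+1) - 1/(2*(2*(N:ℝ)+1)+1)) := by
      rw [show 2*((N:ℝ)+1)-1 = 2*N+1 by ring, show 4*((N:ℝ)+1)-3 = 4*N+1 by ring,
        show 2*(N:ℝ)+1+1 = 2*(N+1) by ring, show 4*(N:ℝ)+1+1+1+1 = 4*(N+1) by ring,
        show 4*(N:ℝ)+1+1+1 = 4*N+3 by ring, show 4*(N:ℝ)+1+1 = 2*(2*N+1) by ring,
        show 2*(2*(N:ℝ))+1 = 4*N+1 by ring, show 2*(2*(N:ℝ)+1)+1 = 4*N+3 by ring]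
      field_simp
      ring
    rw [key]
    norm_num
    ring

/-- The logarithm in `H_m - log m → γ` is split here so that `log N` can cancel. -/
lemma tendsto_harmonic_mul {c : ℕ} (hc : c ≠ 0) :
    Tendsto (fun N : ℕ => (harmonic (c*N) : ℝ) - Real.log N) atTop
      (𝓝 (Real.eulerMascheroniConstant + Real.log c)) := by
  have h := (Real.tendsto_harmonic_sub_log.comp
    (tendsto_id.const_mul_atTop' (Nat.pos_of_ne_zero hc))).add_const (Real.log c)
  refine h.congr' ?_
  filter_upwards [eventually_ne_atTop 0] with N hN
  simp only [Function.comp, id]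
  rw [Nat.cast_mul, Real.log_mul (by exact_mod_cast hc) (by exact_mod_cast hN)]
  ring

theorem stmt_18 :
    HasSum (fun n : ℕ => 1 / (((n:ℝ)+1)^2 * (2*((n:ℝ)+1)-1) * (4*((n:ℝ)+1)-3))) ((π^2 + 8 * π - 24 * Real.log 2) / 18) := by
  rw [hasSum_iff_tendsto_nat_of_nonneg]
  · simp only [partial_sum_eq]
    have hz : Tendsto (fun N : ℕ => ∑ n ∈ Finset.range N, 1 / ((n:ℝ)+1)^2) atTop
        (𝓝 (π^2/6)) := by
      have h := ((hasSum_nat_add_iff' 1).2 hasSum_zeta_two).tendsto_sum_nat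
      simpa using h
    have hL := Real.tendsto_sum_pi_div_four.comp
      (tendsto_id.const_mul_atTop' (show 0 < 2 by norm_num))
    have h1 := tendsto_harmonic_mul one_ne_zero
    have h2 := tendsto_harmonic_mul two_ne_zero
    have h4 := tendsto_harmonic_mul four_ne_zero
    have hlog : Real.log ((4:ℕ):ℝ) = 2 * Real.log 2 := by
      rw [show ((4:ℕ):ℝ) = 2^2 by norm_num, Real.log_pow]; norm_num
    have h := ((((hz.const_mul (1/3)).add (h1.const_mul (28/9))).sub (h2.const_mul (44/9))).add
      (h4.const_mul (16/9))).add (hL.const_mul (16/9))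
    convert h using 1
    · funext N
      simp only [Function.comp, id, one_mul]
      ring
    · rw [hlog]
      congr 1
      push_cast
      rw [Real.log_one]
      ring
  · intro n
    have h0 : (0:ℝ) ≤ n := n.cast_nonneg
    have h1 : 0 < 2*((n:ℝ)+1)-1 := by linarith
    have h2 : 0 < 4*((n:ℝ)+1)-3 := by linarith
    positivity
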